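/- Convergence of the alternating minimization iterates: if (U^{(k)})_{k≥0} and (V^{(k)})_{k≥0} are alternating-minimization iterates for f, then there exist U* ∈ ℝ^{m×r} and V* ∈ ℝ^{r×n} such that U^{(k)} → U* and V^{(k)} → V* as k → ∞. -/

import Mathlib

open Finset Matrix

/-- Squared Frobenius norm: `frobSq X = ‖X‖_F²`. -/
noncomputable def frobSq {a b : ℕ} (X : Matrix (Fin a) (Fin b) ℝ) : ℝ :=
  ∑ i, ∑ j, (X i j) ^ 2

/-- The matrix-completion objective
`f(U,V) = (1/2)(‖U‖_F² + ‖V‖_F²) + (μ/2) ∑_{(i,j)∈Ω} ((UV − M)_{ij})² + (ν/2) ‖L(UV) − b‖²`. -/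
noncomputable def objF {m n r p : ℕ} (Ω : Finset (Fin m × Fin n)) (M : Matrix (Fin m) (Fin n) ℝ)
    (L : Matrix (Fin m) (Fin n) ℝ →ₗ[ℝ] EuclideanSpace ℝ (Fin p))
    (b : EuclideanSpace ℝ (Fin p)) (μ ν : ℝ)
    (U : Matrix (Fin m) (Fin r) ℝ) (V : Matrix (Fin r) (Fin n) ℝ) : ℝ :=
  (1 / 2) * (frobSq U + frobSq V)
    + (μ / 2) * ∑ ij ∈ Ω, ((U * V - M) ij.1 ij.2) ^ 2
    + (ν / 2) * ‖L (U * V) - b‖ ^ 2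



theorem KL_chain {K R σ : Type*} [Fintype σ] [CommRing K] [CommRing R] [Algebra K R]
    (D : Derivation K R R) (A : σ → R) (F : MvPolynomial σ K) :
    D (MvPolynomial.aeval A F) =
      ∑ i, MvPolynomial.aeval A (MvPolynomial.pderiv i F) * D (A i) := by
  classical
  induction F using MvPolynomial.induction_on with
  | C a => simp
  | add p q hp hq => simp [hp, hq, add_mul, Finset.sum_add_distrib]
  | mul_X p i hp =>
    simp only [map_mul, MvPolynomial.aeval_X, Derivation.leibniz, hp, smul_eq_mul,
      MvPolynomial.pderiv_X, map_add, add_mul, Finset.sum_add_distrib, Finset.mul_sum]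
    congr 1
    · rw [Finset.sum_eq_single i]
      · simp
      · intro b _ hb
        simp [hb.symm]
      · simp
    · refine Finset.sum_congr rfl fun j _ => ?_
      ring

theorem KL_formallySmooth (K L : Type*) [Field K] [CharZero K] [Field L] [Algebra K L] :
    Algebra.FormallySmooth K L := by
  obtain ⟨s, hs⟩ := exists_isTranscendenceBasis K L
  have h := hs.isAlgebraic_field
  have : CharZero (IntermediateField.adjoin K (Set.range ((↑) : s → L))) :=
    charZero_of_injective_algebraMap (algebraMap K _).injective
  exact .of_algebraicIndependent_of_isSeparable hs.1

open IsLocalRing in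
theorem KL_dvr_false {K O σ : Type*} [Field K] [CharZero K] [CommRing O] [IsDomain O]
    [IsDiscreteValuationRing O] [Algebra K O] [Fintype σ] (F : MvPolynomial σ K) (a : σ → O)
    (h0 : MvPolynomial.aeval a F ≠ 0) (hm : MvPolynomial.aeval a F ∈ maximalIdeal O)
    (hd : ∀ i, MvPolynomial.aeval a F ∣ MvPolynomial.aeval a (MvPolynomial.pderiv i F)) :
    False := by
  obtain ⟨π, hπ⟩ := IsDiscreteValuationRing.exists_irreducible O
  obtain ⟨e, u, hu⟩ := IsDiscreteValuationRing.eq_unit_mul_pow_irreducible h0 hπ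
  have hmax : maximalIdeal O = Ideal.span {π} := hπ.maximalIdeal_eq
  have hπ0 : π ≠ 0 := hπ.ne_zero
  have he : e ≠ 0 := by
    rintro rfl
    rw [hu] at hm
    simp at hm
  set Q := O ⧸ Ideal.span {π ^ (e + 1)}
  let mk : O →ₐ[K] Q := Ideal.Quotient.mkₐ K _
  have hmks : Function.Surjective mk := Ideal.Quotient.mkₐ_surjective _ _
  have hmk : ∀ x y : O, mk x = mk y ↔ π ^ (e + 1) ∣ x - y := fun x y => by
    change Ideal.Quotient.mk _ x = Ideal.Quotient.mk _ y ↔ _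
    rw [Ideal.Quotient.eq, Ideal.mem_span_singleton]
  let res : O →ₐ[K] ResidueField O := IsScalarTower.toAlgHom K O (ResidueField O)
  have hres : ∀ x, res x = 0 ↔ π ∣ x := fun x => by
    change residue O x = 0 ↔ _
    rw [residue_eq_zero_iff, hmax, Ideal.mem_span_singleton]
  have hress : Function.Surjective res := residue_surjective
  let g : Q →ₐ[K] ResidueField O := Ideal.Quotient.liftₐ _ res (by
    intro x hx
    rw [Ideal.mem_span_singleton] at hx
    rw [hres]
    exact (dvd_pow_self π (by omega)).trans hx)
  have hg : ∀ x, g (mk x) = res x := fun x => rfl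
  have hgs : Function.Surjective g := fun y => by
    obtain ⟨x, rfl⟩ := hress y
    exact ⟨mk x, rfl⟩
  have hker : IsNilpotent (RingHom.ker (g : Q →+* ResidueField O)) := by
    refine ⟨e + 1, ?_⟩
    have : RingHom.ker (g : Q →+* ResidueField O) ≤ Ideal.span {mk π} := by
      intro x hx
      obtain ⟨y, rfl⟩ := hmks x
      rw [RingHom.mem_ker] at hx
      change res y = 0 at hx
      rw [hres] at hx
      rw [Ideal.mem_span_singleton]
      exact map_dvd mk hx
    refine le_bot_iff.mp ((Ideal.pow_right_mono this _).trans ?_)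
    rw [Ideal.span_singleton_pow, ← map_pow, (hmk (π ^ (e+1)) 0).2 (by simp)]
    simp
  have hfs : Algebra.FormallySmooth K (ResidueField O) := KL_formallySmooth K (ResidueField O)
  let s : ResidueField O →ₐ[K] Q :=
    Algebra.FormallySmooth.liftOfSurjective (AlgHom.id K _) g hgs hker
  have hs : ∀ x, g (s x) = x := fun x =>
    Algebra.FormallySmooth.liftOfSurjective_apply (AlgHom.id K _) g hgs hker x
  let φ : Polynomial (ResidueField O) →ₐ[K] Q :=
    { Polynomial.eval₂RingHom (s : ResidueField O →+* Q) (mk π) with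
      commutes' := fun r => by
        change Polynomial.eval₂ _ _ (algebraMap K (Polynomial (ResidueField O)) r) = _
        rw [Polynomial.algebraMap_apply]
        simp }
  have hφC : ∀ c, φ (Polynomial.C c) = s c := fun c => by
    change Polynomial.eval₂ _ _ _ = _
    simp
  have hφX : φ Polynomial.X = mk π := by
    change Polynomial.eval₂ _ _ _ = _
    simp
  have hstep : ∀ z : O, ∃ w, mk z = φ (Polynomial.C (res z)) + mk (π * w) := by
    intro z
    obtain ⟨y, hy⟩ := hmks (mk z - φ (Polynomial.C (res z)))
    have : res y = 0 := by
      rw [← hg, hy, map_sub, hφC, hs, hg, sub_self]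
    obtain ⟨w, rfl⟩ := (hres y).1 this
    exact ⟨w, by rw [hy]; ring⟩
  have hsurj' : ∀ (j : ℕ) (y : O), ∃ p z, mk y = φ p + mk (π ^ j * z) := by
    intro j y
    induction j with
    | zero => exact ⟨0, y, by simp⟩
    | succ j ih =>
      obtain ⟨p, z, h⟩ := ih
      obtain ⟨w, hw⟩ := hstep z
      refine ⟨p + Polynomial.X ^ j * Polynomial.C (res z), w, ?_⟩
      have e1 : φ (p + Polynomial.X ^ j * Polynomial.C (res z)) =
          φ p + mk π ^ j * φ (Polynomial.C (res z)) := by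
        rw [map_add, map_mul, map_pow, hφX]
      have e2 : mk (π ^ (j + 1) * w) = mk π ^ j * mk (π * w) := by
        rw [← map_pow, ← map_mul]
        congr 1
        ring
      rw [h, e1, e2, map_mul, map_pow, hw]
      ring
  have hsurj : ∀ y : O, ∃ p, φ p = mk y := by
    intro y
    obtain ⟨p, z, h⟩ := hsurj' (e + 1) y
    refine ⟨p, ?_⟩
    rw [h, map_mul, (hmk (π ^ (e+1)) 0).2 (by simp)]
    simp
  have hgφ : ∀ p, g (φ p) = p.coeff 0 := by
    intro p
    conv_lhs => rw [← Polynomial.divX_mul_X_add p]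
    have : res π = 0 := (hres π).2 dvd_rfl
    rw [map_add, map_mul, hφX, hφC, map_add, map_mul, hs, hg, this]
    simp
  have hdiv : ∀ (p : Polynomial (ResidueField O)) (j : ℕ) (z : O), j ≤ e + 1 →
      φ p = mk (π ^ j * z) → Polynomial.X ^ j ∣ p := by
    intro p j z hj hp
    have : ∀ i ≤ j, Polynomial.X ^ i ∣ p := by
      intro i
      induction i with
      | zero => simp
      | succ i ih =>
        intro hi
        obtain ⟨q, rfl⟩ := ih (by omega)
        rw [pow_succ]
        apply mul_dvd_mul_left
        rw [Polynomial.X_dvd_iff, ← hgφ]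
        obtain ⟨y, hy⟩ := hmks (φ q)
        rw [← hy, hg, hres]
        rw [map_mul, map_pow, hφX, ← hy, ← map_pow, ← map_mul, hmk] at hp
        have h1 : π ^ (i + 1) ∣ π ^ i * y := by
          have h2 : π ^ (i + 1) ∣ π ^ i * y - π ^ j * z := (pow_dvd_pow _ (by omega)).trans hp
          have h3 : π ^ (i + 1) ∣ π ^ j * z := Dvd.dvd.mul_right (pow_dvd_pow _ (by omega)) _
          simpa using dvd_add h2 h3
        rw [pow_succ] at h1
        exact (mul_dvd_mul_iff_left (pow_ne_zero _ hπ0)).1 h1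
    exact this j le_rfl
  choose A hA using fun i => hsurj (a i)
  have hcomp : ∀ G : MvPolynomial σ K, φ (MvPolynomial.aeval A G) = mk (MvPolynomial.aeval a G) := by
    intro G
    have : φ.comp (MvPolynomial.aeval A) = mk.comp (MvPolynomial.aeval a) := by
      ext i
      simp [hA]
    exact DFunLike.congr_fun this G
  obtain ⟨G, hG⟩ : Polynomial.X ^ e ∣ MvPolynomial.aeval A F :=
    hdiv _ e u (by omega) (by rw [hcomp, hu, mul_comm])
  have hnot : ¬ Polynomial.X ∣ G := by
    rintro ⟨G', rfl⟩
    have h1 := hcomp F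
    rw [hG, ← mul_assoc, ← pow_succ, map_mul, map_pow, hφX, ← map_pow,
      (hmk (π ^ (e+1)) 0).2 (by simp), map_zero, zero_mul, ← map_zero mk, hu, hmk, zero_sub,
      dvd_neg, mul_comm, pow_succ, mul_dvd_mul_iff_left (pow_ne_zero _ hπ0)] at h1
    exact hπ.not_isUnit (isUnit_of_dvd_unit h1 u.isUnit)
  have hder : Polynomial.X ^ e ∣ Polynomial.derivative (MvPolynomial.aeval A F) := by
    have := KL_chain (Polynomial.derivative'.restrictScalars K) A F
    change Polynomial.derivative _ = _ at this
    rw [this]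
    refine Finset.dvd_sum fun i _ => Dvd.dvd.mul_right ?_ _
    obtain ⟨c, hc⟩ := hd i
    refine hdiv _ e (u * c) (by omega) ?_
    rw [hcomp, hc, hu]
    congr 1
    ring
  apply hnot
  rw [hG, Polynomial.derivative_mul, dvd_add_left (dvd_mul_right _ _)] at hder
  obtain ⟨k, rfl⟩ := Nat.exists_eq_succ_of_ne_zero he
  rw [Polynomial.derivative_X_pow, Nat.succ_sub_one, pow_succ, mul_comm (Polynomial.C _), mul_assoc,
    mul_dvd_mul_iff_left (pow_ne_zero _ Polynomial.X_ne_zero), Polynomial.X_dvd_iff,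
    Polynomial.coeff_C_mul] at hder
  rw [Polynomial.X_dvd_iff]
  have : CharZero (ResidueField O) := charZero_of_injective_algebraMap (algebraMap K _).injective
  rcases mul_eq_zero.1 hder with h | h
  · exact absurd h (by exact_mod_cast Nat.succ_ne_zero k)
  · exact h

open IsLocalRing in
theorem KL_dvr_of_normal {C : Type*} [CommRing C] [IsDomain C] [IsNoetherianRing C]
    [IsIntegrallyClosed C] (b : C) (hb0 : b ≠ 0) (hb : ¬ IsUnit b) :
    ∃ (P : Ideal C) (_ : P.IsPrime), IsDiscreteValuationRing (Localization.AtPrime P) ∧ b ∈ P := by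
  obtain ⟨M, hM, hbM⟩ := exists_max_ideal_of_mem_nonunits hb
  have hle : Ideal.span {b} ≤ M := by
    rw [Ideal.span_le]; simpa using hbM
  obtain ⟨P, hP, -⟩ := Ideal.exists_minimalPrimes_le hle
  have hPp : P.IsPrime := hP.1.1
  have hbP : b ∈ P := hP.1.2 (Ideal.mem_span_singleton_self b)
  have hh : P.height ≤ 1 := Ideal.height_le_one_of_isPrincipal_of_mem_minimalPrimes _ _ hP
  refine ⟨P, hPp, ?_, hbP⟩
  have hdom : IsDomain (Localization.AtPrime P) := inferInstance
  have hnoeth : IsNoetherianRing (Localization.AtPrime P) :=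
    IsLocalization.isNoetherianRing P.primeCompl _ inferInstance
  have hic : IsIntegrallyClosed (Localization.AtPrime P) :=
    isIntegrallyClosed_of_isLocalization _ P.primeCompl P.primeCompl_le_nonZeroDivisors
  have hdim : Ring.KrullDimLE 1 (Localization.AtPrime P) := by
    rw [Ring.krullDimLE_iff, IsLocalization.AtPrime.ringKrullDim_eq_height P]
    exact_mod_cast hh
  have hinj : Function.Injective (algebraMap C (Localization.AtPrime P)) :=
    IsLocalization.injective _ P.primeCompl_le_nonZeroDivisors
  have hnf : ¬ IsField (Localization.AtPrime P) := by
    intro hf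
    have h1 : algebraMap C (Localization.AtPrime P) b ∈ maximalIdeal (Localization.AtPrime P) :=
      (IsLocalization.AtPrime.to_map_mem_maximal_iff _ P b).2 hbP
    rw [isField_iff_maximalIdeal_eq.1 hf, Ideal.mem_bot] at h1
    exact hb0 (hinj (by simpa using h1))
  have hm0 : maximalIdeal (Localization.AtPrime P) ≠ ⊥ := isField_iff_maximalIdeal_eq.not.mp hnf
  have htf := (IsDiscreteValuationRing.TFAE (Localization.AtPrime P) hnf).out 0 3
  refine htf.2 ⟨hic, maximalIdeal _, ⟨hm0, inferInstance⟩, ?_⟩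
  rintro Q ⟨hQ0, hQ⟩
  exact eq_maximalIdeal (Ring.krullDimLE_one_iff_of_noZeroDivisors.1 hdim Q hQ0 hQ)

theorem KL_normalization (K : Type*) {B : Type*} [Field K] [CharZero K] [CommRing B] [IsDomain B]
    [Algebra K B] [Algebra.FiniteType K B] :
    ∃ (C : Subalgebra B (FractionRing B)), IsNoetherianRing C ∧ IsIntegrallyClosed C ∧
      Algebra.IsIntegral B C := by
  obtain ⟨s, g, hinj, hfin⟩ := exists_finite_inj_algHom_of_fg K B
  let A := MvPolynomial (Fin s) K
  let : Algebra A B := g.toRingHom.toAlgebra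
  have : Module.Finite A B := hfin
  have : FaithfulSMul A B := (faithfulSMul_iff_algebraMap_injective A B).2 hinj
  have : Algebra.IsIntegral A B := inferInstance
  let : Algebra A (FractionRing B) := inferInstance
  have : IsScalarTower A B (FractionRing B) := inferInstance
  have : FaithfulSMul A (FractionRing B) := inferInstance
  let := FractionRing.liftAlgebra A (FractionRing B)
  have : IsScalarTower A (FractionRing A) (FractionRing B) :=
    FractionRing.isScalarTower_liftAlgebra A (FractionRing B)
  have : FiniteDimensional (FractionRing A) (FractionRing B) := .of_isLocalization A B (nonZeroDivisors A)
  have : CharZero A := charZero_of_injective_algebraMap (algebraMap K A).injective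
  have : CharZero (FractionRing A) := charZero_of_injective_algebraMap (IsFractionRing.injective A (FractionRing A))
  have h1 : IsNoetherianRing (integralClosure A (FractionRing B)) :=
    integralClosure.isNoetherianRing (K := FractionRing A) (A := A) (L := FractionRing B)
  have h2 : IsIntegrallyClosed (integralClosure A (FractionRing B)) :=
    integralClosure.isIntegrallyClosedOfFiniteExtension (FractionRing A)
  have heq : ∀ x, x ∈ integralClosure B (FractionRing B) ↔ x ∈ integralClosure A (FractionRing B) := by
    intro x
    rw [mem_integralClosure_iff, mem_integralClosure_iff]
    exact ⟨fun h => isIntegral_trans (R := A) (A := B) x h, fun h => h.tower_top⟩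
  let e : integralClosure A (FractionRing B) ≃+* integralClosure B (FractionRing B) :=
    { toFun := fun x => ⟨x.1, (heq x.1).2 x.2⟩
      invFun := fun x => ⟨x.1, (heq x.1).1 x.2⟩
      left_inv := fun x => rfl
      right_inv := fun x => rfl
      map_mul' := fun x y => rfl
      map_add' := fun x y => rfl }
  refine ⟨integralClosure B (FractionRing B), isNoetherianRing_of_ringEquiv _ e, .of_equiv e,
    inferInstance⟩

open IsLocalRing in
theorem KL_exists_dvr_aux.{u, v} (K : Type v) {B C : Type u} [Field K] [CommRing B] [IsDomain B]
    [CommRing C] [IsDomain C] [IsNoetherianRing C] [IsIntegrallyClosed C]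
    [Algebra K B] [Algebra B C] [Algebra K C] [IsScalarTower K B C] [Algebra.IsIntegral B C]
    (hinjC : Function.Injective (algebraMap B C)) (b : B) (hb0 : b ≠ 0) (hb : ¬ IsUnit b) :
    ∃ (O : Type u) (_ : CommRing O) (_ : IsDomain O) (_ : IsDiscreteValuationRing O)
      (_ : Algebra K O) (ψ : B →ₐ[K] O), ψ b ≠ 0 ∧ ψ b ∈ maximalIdeal O := by
  have hbC : ¬ IsUnit (algebraMap B C b) := by
    intro h
    obtain ⟨M, hM, hbM⟩ := exists_max_ideal_of_mem_nonunits hb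
    obtain ⟨Q, hQ, hQM⟩ := Ideal.exists_ideal_over_prime_of_isIntegral_of_isDomain (S := C) M
      (by rw [(RingHom.injective_iff_ker_eq_bot _).1 hinjC]; exact bot_le)
    rw [← hQM, Ideal.mem_comap] at hbM
    exact hQ.ne_top (Ideal.eq_top_of_isUnit_mem _ hbM h)
  obtain ⟨P, hP, hdvr, hbP⟩ := KL_dvr_of_normal (algebraMap B C b)
    (by simpa using hinjC.ne hb0) hbC
  have hinj : Function.Injective (algebraMap C (Localization.AtPrime P)) :=
    IsLocalization.injective _ P.primeCompl_le_nonZeroDivisors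
  refine ⟨Localization.AtPrime P, inferInstance, inferInstance, hdvr, inferInstance,
    (IsScalarTower.toAlgHom K C _).comp (IsScalarTower.toAlgHom K B C), ?_, ?_⟩
  · simpa using (hinj.comp hinjC).ne hb0
  · exact (IsLocalization.AtPrime.to_map_mem_maximal_iff _ P _).2 hbP

open IsLocalRing in
theorem KL_exists_dvr.{u, v} (K : Type v) {B : Type u} [Field K] [CharZero K] [CommRing B] [IsDomain B]
    [Algebra K B] [Algebra.FiniteType K B] (b : B) (hb0 : b ≠ 0) (hb : ¬ IsUnit b) :
    ∃ (O : Type u) (_ : CommRing O) (_ : IsDomain O) (_ : IsDiscreteValuationRing O)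
      (_ : Algebra K O) (ψ : B →ₐ[K] O), ψ b ≠ 0 ∧ ψ b ∈ maximalIdeal O := by
  obtain ⟨C, h1, h2, h3⟩ := KL_normalization K (B := B)
  have hinjC : Function.Injective (algebraMap B C) := by
    intro x y hxy
    have : algebraMap B (FractionRing B) x = algebraMap B (FractionRing B) y :=
      congrArg Subtype.val hxy
    exact IsFractionRing.injective B (FractionRing B) this
  exact KL_exists_dvr_aux K hinjC b hb0 hb

open MvPolynomial in
theorem KL_unit {K σ : Type*} [Field K] [CharZero K] [Fintype σ] (F : MvPolynomial σ K)
    (hF : F ≠ 0) : ∃ q : MvPolynomial (σ ⊕ σ) K, ∀ x : σ → K, eval x F ≠ 0 →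
      eval x F * eval (Sum.elim x (fun i => eval x (pderiv i F) / eval x F)) q = 1 := by
  let L := Localization.Away F
  have hle : Submonoid.powers F ≤ nonZeroDivisors (MvPolynomial σ K) :=
    powers_le_nonZeroDivisors_of_noZeroDivisors hF
  have hdom : IsDomain L := IsLocalization.isDomain_localization hle
  have hinj : Function.Injective (algebraMap (MvPolynomial σ K) L) :=
    IsLocalization.injective L hle
  let ι : MvPolynomial σ K →ₐ[K] L := IsScalarTower.toAlgHom K _ L
  let inv : L := IsLocalization.Away.invSelf F
  have hinv : ι F * inv = 1 := IsLocalization.Away.mul_invSelf F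
  let v : σ ⊕ σ → L := Sum.elim (fun i => ι (X i)) (fun i => ι (pderiv i F) * inv)
  let B : Subalgebra K L := (aeval (R := K) v).range
  have hBft : Algebra.FiniteType K B :=
    Algebra.FiniteType.of_surjective (aeval (R := K) v).rangeRestrict
      (AlgHom.rangeRestrict_surjective _)
  let xB : σ → B := fun i => ⟨ι (X i), ⟨X (Sum.inl i), by simp [v]⟩⟩
  let uB : σ → B := fun i => ⟨ι (pderiv i F) * inv, ⟨X (Sum.inr i), by simp [v]⟩⟩
  have hx : ∀ G : MvPolynomial σ K, ((aeval xB G : B) : L) = ι G := by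
    intro G
    have : B.val.comp (aeval xB) = ι := by
      ext i
      simp [xB]
    exact DFunLike.congr_fun this G
  have key : IsUnit (aeval xB F : B) := by
    by_contra hb
    have hb0 : (aeval xB F : B) ≠ 0 := by
      intro h
      have h1 := hx F
      rw [h] at h1
      have h2 : ι F = 0 := by simpa using h1.symm
      exact hF (hinj (h2.trans (map_zero _).symm))
    obtain ⟨O, _, _, _, _, ψ, h0, hm⟩ := KL_exists_dvr K (aeval xB F : B) hb0 hb
    have hψ : ∀ G : MvPolynomial σ K, aeval (fun i => ψ (xB i)) G = ψ (aeval xB G) := by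
      intro G
      have : aeval (fun i => ψ (xB i)) = ψ.comp (aeval xB) := by
        ext i
        simp
      exact DFunLike.congr_fun this G
    refine KL_dvr_false F (fun i => ψ (xB i)) (by rwa [hψ]) (by rwa [hψ]) fun i => ?_
    rw [hψ, hψ]
    refine map_dvd ψ ⟨uB i, ?_⟩
    apply Subtype.ext
    rw [hx]
    change _ = ((aeval xB F : B) : L) * (ι (pderiv i F) * inv)
    rw [hx, mul_left_comm, hinv, mul_one]
  obtain ⟨w, hw⟩ := key.exists_right_inv
  obtain ⟨q, hq⟩ := w.2
  have hq' : ι F * aeval v q = 1 := by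
    have := congrArg Subtype.val hw
    change ((aeval xB F : B) : L) * (w : L) = 1 at this
    rw [hx, ← hq] at this
    exact this
  refine ⟨q, fun x hxF => ?_⟩
  have hu : IsUnit (eval x F) := isUnit_iff_ne_zero.2 hxF
  let l : L →+* K := IsLocalization.Away.lift F (g := eval x) hu
  have hl : ∀ G, l (ι G) = eval x G := fun G => IsLocalization.Away.lift_eq F hu G
  have hlinv : l inv = (eval x F)⁻¹ := by
    have := congrArg l hinv
    rw [map_mul, hl, map_one] at this
    exact eq_inv_of_mul_eq_one_right this
  have hcomp : ∀ G : MvPolynomial (σ ⊕ σ) K, l (aeval v G) =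
      eval (Sum.elim x (fun i => eval x (pderiv i F) / eval x F)) G := by
    intro G
    have : l.comp (aeval (R := K) v : MvPolynomial (σ ⊕ σ) K →+* L) =
        eval (Sum.elim x (fun i => eval x (pderiv i F) / eval x F)) := by
      apply MvPolynomial.ringHom_ext
      · intro r
        have : aeval (R := K) v (C r) = ι (C r) := by
          rw [MvPolynomial.algHom_C, MvPolynomial.algHom_C]
        simp only [RingHom.comp_apply, RingHom.coe_coe, this, hl, eval_C]
      · rintro (i | i)
        · simp [v, hl]
        · simp [v, hl, hlinv, div_eq_mul_inv]
    exact DFunLike.congr_fun this G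
  have := congrArg l hq'
  rwa [map_mul, hl, hcomp, map_one] at this


open MvPolynomial in
theorem KL_bound {σ : Type*} (q : MvPolynomial σ ℝ) : ∃ (C : ℝ) (N : ℕ), 0 ≤ C ∧
    ∀ (T : ℝ) (y : σ → ℝ), 1 ≤ T → (∀ i, |y i| ≤ T) → |eval y q| ≤ C * T ^ N := by
  induction q using MvPolynomial.induction_on with
  | C a => exact ⟨|a|, 0, abs_nonneg a, fun T y _ _ => by simp⟩
  | add p q hp hq =>
    obtain ⟨C1, N1, h1, hp⟩ := hp
    obtain ⟨C2, N2, h2, hq⟩ := hq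
    refine ⟨C1 + C2, N1 + N2, by positivity, fun T y hT hy => ?_⟩
    rw [map_add, add_mul]
    refine (abs_add_le _ _).trans (add_le_add ((hp T y hT hy).trans ?_) ((hq T y hT hy).trans ?_))
    · exact mul_le_mul_of_nonneg_left (pow_le_pow_right₀ hT (by omega)) h1
    · exact mul_le_mul_of_nonneg_left (pow_le_pow_right₀ hT (by omega)) h2
  | mul_X p i hp =>
    obtain ⟨C1, N1, h1, hp⟩ := hp
    refine ⟨C1, N1 + 1, h1, fun T y hT hy => ?_⟩
    rw [map_mul, eval_X, abs_mul, pow_succ, ← mul_assoc]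
    exact mul_le_mul (hp T y hT hy) (hy i) (abs_nonneg _) (by positivity)

open MvPolynomial in
theorem KL_lip {σ : Type*} (q : MvPolynomial σ ℝ) (R : ℝ) (hR : 1 ≤ R) : ∃ C : ℝ, 0 ≤ C ∧
    ∀ (δ : ℝ) (x y : σ → ℝ), 0 ≤ δ → (∀ i, |x i| ≤ R) → (∀ i, |y i| ≤ R) →
      (∀ i, |x i - y i| ≤ δ) → |eval x q - eval y q| ≤ C * δ := by
  induction q using MvPolynomial.induction_on with
  | C a => exact ⟨0, le_rfl, fun T y _ _ => by simp⟩
  | add p q hp hq =>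
    obtain ⟨C1, h1, hp⟩ := hp
    obtain ⟨C2, h2, hq⟩ := hq
    refine ⟨C1 + C2, by positivity, fun δ x y hδ hx hy hxy => ?_⟩
    rw [map_add, map_add, add_mul, add_sub_add_comm]
    exact (abs_add_le _ _).trans (add_le_add (hp δ x y hδ hx hy hxy) (hq δ x y hδ hx hy hxy))
  | mul_X p i hp =>
    obtain ⟨C1, h1, hp⟩ := hp
    obtain ⟨C2, N, h2, hb⟩ := KL_bound p
    refine ⟨C1 * R + C2 * R ^ N, by positivity, fun δ x y hδ hx hy hxy => ?_⟩
    rw [map_mul, map_mul, eval_X, eval_X]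
    have e : eval x p * x i - eval y p * y i =
      (eval x p - eval y p) * x i + eval y p * (x i - y i) := by ring
    rw [e]
    refine (abs_add_le _ _).trans ?_
    rw [abs_mul, abs_mul]
    have a1 := mul_le_mul (hp δ x y hδ hx hy hxy) (hx i) (abs_nonneg _) (by positivity)
    have a2 := mul_le_mul (hb R y hR hy) (hxy i) (abs_nonneg _) (by positivity)
    linarith

open MvPolynomial in
theorem KL_crit {σ : Type*} [DecidableEq σ] (P : MvPolynomial σ ℝ) (z : σ → ℝ) (i : σ)
    (h : ∀ t, eval z P ≤ eval (Function.update z i t) P) : eval z (pderiv i P) = 0 := by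
  have hd : ∀ Q : MvPolynomial σ ℝ,
      HasDerivAt (fun t => eval (Function.update z i t) Q) (eval z (pderiv i Q)) (z i) := by
    intro Q
    induction Q using MvPolynomial.induction_on with
    | C a => simpa using hasDerivAt_const (z i) a
    | add p q hp hq =>
      simp only [map_add]
      exact hp.add hq
    | mul_X p j hp =>
      have hj : HasDerivAt (fun t => Function.update z i t j) (if j = i then 1 else 0) (z i) := by
        by_cases hji : j = i
        · subst hji
          simp only [Function.update_self, if_true]
          exact hasDerivAt_id (z j)
        · simpa [hji] using hasDerivAt_const (z i) (z j)
      have := hp.mul hj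
      simp only [map_mul, eval_X, Derivation.leibniz, pderiv_X, smul_eq_mul, map_add]
      convert! this using 1
      by_cases hji : j = i
      · subst hji; simp; ring
      · simp [hji, mul_comm]
  have hm : IsLocalMin (fun t => eval (Function.update z i t) P) (z i) := by
    refine Filter.Eventually.of_forall fun t => ?_
    simpa using h t
  exact hm.hasDerivAt_eq_zero (hd P)

/-- Lojasiewicz gradient inequality for polynomials. -/
theorem KL_ineq {σ : Type*} [Fintype σ] (F : MvPolynomial σ ℝ) (R : ℝ) (hR : 1 ≤ R) :
    ∃ (n : ℕ) (C ε : ℝ), 0 < C ∧ 0 < ε ∧ ∀ (x : σ → ℝ) (g : ℝ), 0 ≤ g → (∀ i, |x i| ≤ R) →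
      0 < MvPolynomial.eval x F → MvPolynomial.eval x F < ε →
      (∀ i, |MvPolynomial.eval x (MvPolynomial.pderiv i F)| ≤ g) →
      (MvPolynomial.eval x F) ^ n ≤ C * g ^ (n + 1) := by
  by_cases hF : F = 0
  · subst hF
    exact ⟨0, 1, 1, one_pos, one_pos, fun x g _ _ h => by simp at h⟩
  obtain ⟨q, hq⟩ := KL_unit F hF
  obtain ⟨C, N, hC, hb⟩ := KL_bound q
  set E : ℝ := (C + 1) * (2 * R) ^ (N + 1) with hE
  have hE0 : 0 < E := by positivity
  refine ⟨N, E, 1 / E, hE0, by positivity, fun x g hg hx h0 hε hgr => ?_⟩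
  set f := MvPolynomial.eval x F
  have h1 := hq x h0.ne'
  set W := g / f with hW
  have hW0 : 0 ≤ W := by positivity
  have h2 := hb (R * (1 + W))
    (Sum.elim x (fun i => MvPolynomial.eval x (MvPolynomial.pderiv i F) / f)) (by nlinarith) (by
    rintro (i | i)
    · exact (hx i).trans (by nlinarith)
    · simp only [Sum.elim_inr]
      rw [abs_div, abs_of_pos h0]
      have : |MvPolynomial.eval x (MvPolynomial.pderiv i F)| / f ≤ W :=
        div_le_div_of_nonneg_right (hgr i) h0.le
      nlinarith)
  have h3 : 1 ≤ f * ((C + 1) * (R * (1 + W)) ^ (N + 1)) := by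
    refine h1.symm.le.trans ?_
    refine mul_le_mul_of_nonneg_left ((le_abs_self _).trans (h2.trans ?_)) h0.le
    exact mul_le_mul (by linarith) (pow_le_pow_right₀ (by nlinarith) (by omega)) (by positivity)
      (by positivity)
  have hfE : f * E < 1 := by
    rwa [lt_div_iff₀ hE0] at hε
  have hW1 : 1 ≤ W := by
    by_contra hlt
    push Not at hlt
    have : (R * (1 + W)) ^ (N + 1) ≤ (2 * R) ^ (N + 1) :=
      pow_le_pow_left₀ (by positivity) (by nlinarith) _
    have : f * ((C + 1) * (R * (1 + W)) ^ (N + 1)) ≤ f * E := by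
      rw [hE]; gcongr
    linarith
  have h4 : (R * (1 + W)) ^ (N + 1) ≤ (2 * R) ^ (N + 1) * W ^ (N + 1) := by
    rw [← mul_pow]
    exact pow_le_pow_left₀ (by positivity) (by nlinarith) _
  have h5 : 1 ≤ f * (E * W ^ (N + 1)) := by
    refine h3.trans (mul_le_mul_of_nonneg_left ?_ h0.le)
    rw [hE, mul_assoc]
    exact mul_le_mul_of_nonneg_left h4 (by positivity)
  have h6 : f * (E * W ^ (N + 1)) * f ^ N = E * g ^ (N + 1) := by
    rw [hW, div_pow]
    field_simp
    ring
  rw [← h6]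
  exact le_mul_of_one_le_left (by positivity) h5

theorem KL_seq (s d : ℕ → ℝ) (hs : ∀ k, 0 ≤ s k) (hd : ∀ k, 0 ≤ d k) (c C : ℝ) (hc : 0 < c)
    (n K : ℕ) (h1 : ∀ k, c * d k ^ 2 ≤ s k - s (k + 1))
    (h2 : ∀ k ≥ K, 0 < s (k + 1) → s (k + 1) ^ n ≤ C * d k ^ (n + 1)) : Summable d := by
  have hanti : Antitone s := antitone_nat_of_succ_le fun k => by
    nlinarith [h1 k, sq_nonneg (d k)]
  by_cases hz : ∃ k, s k = 0
  · obtain ⟨k, hk⟩ := hz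
    refine summable_of_ne_finset_zero (s := Finset.range k) fun j hj => ?_
    have hj' : k ≤ j := by simpa using hj
    have e1 : s j ≤ 0 := hk ▸ hanti hj'
    have e2 := h1 j
    have e3 := hs (j + 1)
    have e4 : d j ^ 2 ≤ 0 := by
      by_contra hlt
      push Not at hlt
      nlinarith [mul_pos hc hlt]
    nlinarith [hd j]
  · have hpos : ∀ k, 0 < s k := fun k => lt_of_le_of_ne (hs k) fun h => hz ⟨k, h.symm⟩
    set φ : ℕ → ℝ := fun k => s k ^ ((1 : ℝ) / (n + 1 : ℕ)) with hφ
    have hφpow : ∀ k, φ k ^ (n + 1) = s k := fun k => by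
      simp only [hφ, one_div]
      exact Real.rpow_inv_natCast_pow (hs k) (by omega)
    have hφ0 : ∀ k, 0 ≤ φ k := fun k => Real.rpow_nonneg (hs k) _
    have hφa : ∀ k, φ (k + 1) ≤ φ k := fun k =>
      Real.rpow_le_rpow (hs _) (hanti (Nat.le_succ k)) (by positivity)
    set C' := max 1 C with hC'
    have hC'1 : 1 ≤ C' := le_max_left _ _
    have hpb : ∀ k ≥ K, φ (k + 1) ^ n ≤ C' * d k := by
      intro k hk
      refine le_of_pow_le_pow_left₀ (n := n + 1) (by omega) (mul_nonneg (by linarith) (hd k)) ?_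
      rw [← pow_mul, mul_comm n, pow_mul, hφpow, mul_pow]
      refine (h2 k hk (hpos _)).trans (mul_le_mul_of_nonneg_right ?_ (pow_nonneg (hd k) _))
      exact (le_max_right 1 C).trans (le_self_pow₀ hC'1 (by omega))
    have hdiff : ∀ a b : ℝ, 0 ≤ b → b ≤ a → a ^ (n + 1) - b ^ (n + 1) ≤ (n + 1) * a ^ n * (a - b) := by
      intro a b hb hab
      have ha := hb.trans hab
      rw [← Commute.geom_sum₂_mul (Commute.all a b)]
      refine mul_le_mul_of_nonneg_right ?_ (by linarith)
      calc ∑ i ∈ Finset.range (n + 1), a ^ i * b ^ (n + 1 - 1 - i)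
          ≤ ∑ i ∈ Finset.range (n + 1), a ^ n := by
            refine Finset.sum_le_sum fun i hi => ?_
            have hi' : i ≤ n := by simpa [Nat.lt_succ_iff] using hi
            calc a ^ i * b ^ (n + 1 - 1 - i) ≤ a ^ i * a ^ (n - i) := by
                  rw [Nat.add_sub_cancel]; gcongr
              _ = a ^ n := by rw [← pow_add]; congr 1; omega
        _ = _ := by simp
    set E := (n + 1) * C' / c with hE
    have hE0 : 0 ≤ E := by positivity
    have hstep : ∀ k ≥ K, 2 * d (k + 1) ≤ d k + E * (φ (k + 1) - φ (k + 2)) := by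
      intro k hk
      have e1 := h1 (k + 1)
      have e2 := hdiff _ _ (hφ0 (k + 2)) (hφa (k + 1))
      rw [hφpow, hφpow] at e2
      have e3 : (n + 1) * φ (k + 1) ^ n * (φ (k + 1) - φ (k + 2)) ≤
          (n + 1) * (C' * d k) * (φ (k + 1) - φ (k + 2)) := by
        refine mul_le_mul_of_nonneg_right ?_ (by linarith [hφa (k + 1)])
        exact mul_le_mul_of_nonneg_left (hpb k hk) (by positivity)
      have e4 : d (k + 1) ^ 2 ≤ d k * (E * (φ (k + 1) - φ (k + 2))) := by
        have : d k * (E * (φ (k + 1) - φ (k + 2))) =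
          ((n + 1) * (C' * d k) * (φ (k + 1) - φ (k + 2))) / c := by
          rw [hE]; field_simp
        rw [this, le_div_iff₀ hc]
        linarith
      have e5 : 0 ≤ E * (φ (k + 1) - φ (k + 2)) := mul_nonneg hE0 (by linarith [hφa (k + 1)])
      refine abs_le_of_sq_le_sq' ?_ (add_nonneg (hd k) e5) |>.2
      nlinarith [sq_nonneg (d k - E * (φ (k + 1) - φ (k + 2)))]
    have hsum : ∀ m, ∑ k ∈ Finset.range m, d (k + K) + 2 * d (m + K) ≤
        2 * d K + E * (φ (K + 1) - φ (m + K + 1)) := by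
      intro m
      induction m with
      | zero => simp
      | succ m ih =>
        rw [Finset.sum_range_succ]
        have := hstep (m + K) (by omega)
        have e : m + 1 + K = m + K + 1 := by omega
        rw [e]
        have e' : m + K + 1 + 1 = m + K + 2 := by omega
        rw [e']
        linarith
    rw [← summable_nat_add_iff K]
    refine summable_of_sum_range_le (c := 2 * d K + E * φ (K + 1)) (fun k => hd _) fun m => ?_
    have e1 := hsum m
    have e2 := hd (m + K)
    have e3 := mul_nonneg hE0 (hφ0 (m + K + 1))
    linarith

open MvPolynomial in
theorem KL_converge {σ : Type*} [Fintype σ] (P : MvPolynomial σ ℝ) (x y : ℕ → σ → ℝ) (R c l : ℝ)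
    (hR : 1 ≤ R) (hc : 0 < c) (hx : ∀ k i, |x k i| ≤ R)
    (hl : ∀ k, l ≤ eval (x k) P)
    (hy : ∀ k i, y k i = x k i ∨ y k i = x (k + 1) i)
    (hdesc : ∀ k, c * ∑ i, (x (k + 1) i - x k i) ^ 2 ≤ eval (x k) P - eval (x (k + 1)) P)
    (hcrit : ∀ k i, eval (y k) (pderiv i P) = 0 ∨ eval (x (k + 1)) (pderiv i P) = 0) :
    ∃ z : σ → ℝ, Filter.Tendsto x Filter.atTop (nhds z) := by
  set d : ℕ → ℝ := fun k => √(∑ i, (x (k + 1) i - x k i) ^ 2) with hd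
  have hd0 : ∀ k, 0 ≤ d k := fun k => Real.sqrt_nonneg _
  have hdsq : ∀ k, d k ^ 2 = ∑ i, (x (k + 1) i - x k i) ^ 2 := fun k =>
    Real.sq_sqrt (Finset.sum_nonneg fun i _ => sq_nonneg _)
  have hdi : ∀ k i, |x (k + 1) i - x k i| ≤ d k := fun k i => by
    refine Real.abs_le_sqrt ?_
    exact Finset.single_le_sum (f := fun i => (x (k + 1) i - x k i) ^ 2)
      (fun i _ => sq_nonneg _) (Finset.mem_univ i)
  have hanti : Antitone fun k => eval (x k) P := antitone_nat_of_succ_le fun k => by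
    have h := hdesc k
    rw [← hdsq] at h
    nlinarith [sq_nonneg (d k)]
  have hbdd : BddBelow (Set.range fun k => eval (x k) P) := ⟨l, by
    rintro _ ⟨k, rfl⟩
    exact hl k⟩
  set fs : ℝ := ⨅ k, eval (x k) P with hfs
  have hlim := tendsto_atTop_ciInf hanti hbdd
  set F : MvPolynomial σ ℝ := P - C fs with hF
  have hFe : ∀ z, eval z F = eval z P - fs := fun z => by simp [hF]
  have hFd : ∀ i, pderiv i F = pderiv i P := fun i => by simp [hF]
  obtain ⟨n, A, ε, hA, hε, hKL⟩ := KL_ineq F R hR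
  choose Lc hLc0 hLc using fun i => KL_lip (pderiv i P) R hR
  set Λ : ℝ := ∑ i, Lc i with hΛ
  have hΛ0 : 0 ≤ Λ := Finset.sum_nonneg fun i _ => hLc0 i
  have hgrad : ∀ k i, |eval (x (k + 1)) (pderiv i F)| ≤ Λ * d k := by
    intro k i
    rw [hFd]
    have hΛi : Lc i ≤ Λ := Finset.single_le_sum (f := Lc) (fun i _ => hLc0 i) (Finset.mem_univ i)
    rcases hcrit k i with h | h
    · have h1 := hLc i (d k) (x (k + 1)) (y k) (hd0 k) (hx _)
        (fun j => by rcases hy k j with e | e <;> rw [e] <;> exact hx _ _)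
        (fun j => by
          rcases hy k j with e | e
          · rw [e]; exact hdi k j
          · rw [e]; simpa using hd0 k)
      rw [h, sub_zero] at h1
      exact h1.trans (mul_le_mul_of_nonneg_right hΛi (hd0 k))
    · rw [h, abs_zero]
      exact mul_nonneg hΛ0 (hd0 k)
  have hev : ∀ᶠ k in Filter.atTop, eval (x k) P < fs + ε :=
    hlim.eventually_lt_const (by linarith)
  obtain ⟨K, hK⟩ := Filter.eventually_atTop.1 hev
  have hsum : Summable d := by
    refine KL_seq (fun k => eval (x k) F) d (fun k => ?_) hd0 c (A * Λ ^ (n + 1)) hc n K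
      (fun k => ?_) (fun k hk hpos => ?_)
    · simp only [hFe]
      have := ciInf_le hbdd k
      linarith
    · simp only [hFe]
      rw [hdsq]
      linarith [hdesc k]
    · have := hKL (x (k + 1)) (Λ * d k) (mul_nonneg hΛ0 (hd0 k)) (hx _) hpos
        (by rw [hFe]; linarith [hK (k + 1) (by omega)]) (hgrad k)
      rwa [mul_pow, ← mul_assoc] at this
  have hcs : CauchySeq x := by
    refine cauchySeq_of_dist_le_of_summable d (fun k => ?_) hsum
    rw [dist_comm, dist_pi_le_iff (hd0 k)]
    intro i
    rw [Real.dist_eq]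
    exact hdi k i
  exact cauchySeq_tendsto_of_complete hcs

/-- the data-fitting part of the objective, as a function of the product -/
noncomputable def KL_dat {m n p : ℕ} (Ω : Finset (Fin m × Fin n)) (M : Matrix (Fin m) (Fin n) ℝ)
    (L : Matrix (Fin m) (Fin n) ℝ →ₗ[ℝ] EuclideanSpace ℝ (Fin p))
    (b : EuclideanSpace ℝ (Fin p)) (μ ν : ℝ) (X : Matrix (Fin m) (Fin n) ℝ) : ℝ :=
  (μ / 2) * ∑ ij ∈ Ω, ((X - M) ij.1 ij.2) ^ 2 + (ν / 2) * ‖L X - b‖ ^ 2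

theorem KL_objF_eq {m n r p : ℕ} (Ω : Finset (Fin m × Fin n)) (M : Matrix (Fin m) (Fin n) ℝ)
    (L : Matrix (Fin m) (Fin n) ℝ →ₗ[ℝ] EuclideanSpace ℝ (Fin p))
    (b : EuclideanSpace ℝ (Fin p)) (μ ν : ℝ) (U : Matrix (Fin m) (Fin r) ℝ)
    (V : Matrix (Fin r) (Fin n) ℝ) :
    objF Ω M L b μ ν U V = (1 / 2) * (frobSq U + frobSq V) + KL_dat Ω M L b μ ν (U * V) := by
  unfold objF KL_dat
  ring

theorem KL_dat_nonneg {m n p : ℕ} (Ω : Finset (Fin m × Fin n)) (M : Matrix (Fin m) (Fin n) ℝ)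
    (L : Matrix (Fin m) (Fin n) ℝ →ₗ[ℝ] EuclideanSpace ℝ (Fin p))
    (b : EuclideanSpace ℝ (Fin p)) (μ ν : ℝ) (hμ : 0 < μ) (hν : 0 < ν)
    (X : Matrix (Fin m) (Fin n) ℝ) : 0 ≤ KL_dat Ω M L b μ ν X := by
  unfold KL_dat
  have : 0 ≤ ∑ ij ∈ Ω, ((X - M) ij.1 ij.2) ^ 2 := Finset.sum_nonneg fun _ _ => sq_nonneg _
  positivity

theorem KL_dat_mid {m n p : ℕ} (Ω : Finset (Fin m × Fin n)) (M : Matrix (Fin m) (Fin n) ℝ)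
    (L : Matrix (Fin m) (Fin n) ℝ →ₗ[ℝ] EuclideanSpace ℝ (Fin p))
    (b : EuclideanSpace ℝ (Fin p)) (μ ν : ℝ) (hμ : 0 < μ) (hν : 0 < ν)
    (X Y : Matrix (Fin m) (Fin n) ℝ) :
    KL_dat Ω M L b μ ν ((1 / 2 : ℝ) • (X + Y)) ≤
      (1 / 2) * KL_dat Ω M L b μ ν X + (1 / 2) * KL_dat Ω M L b μ ν Y := by
  unfold KL_dat
  have h1 : ∑ ij ∈ Ω, (((1 / 2 : ℝ) • (X + Y) - M) ij.1 ij.2) ^ 2 ≤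
      (1 / 2) * ∑ ij ∈ Ω, ((X - M) ij.1 ij.2) ^ 2 + (1 / 2) * ∑ ij ∈ Ω, ((Y - M) ij.1 ij.2) ^ 2 := by
    rw [Finset.mul_sum, Finset.mul_sum, ← Finset.sum_add_distrib]
    refine Finset.sum_le_sum fun ij _ => ?_
    simp only [Matrix.sub_apply, Matrix.smul_apply, Matrix.add_apply, smul_eq_mul]
    nlinarith [sq_nonneg (X ij.1 ij.2 - Y ij.1 ij.2)]
  have h2 : ‖L ((1 / 2 : ℝ) • (X + Y)) - b‖ ^ 2 ≤
      (1 / 2) * ‖L X - b‖ ^ 2 + (1 / 2) * ‖L Y - b‖ ^ 2 := by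
    have e : L ((1 / 2 : ℝ) • (X + Y)) - b = (1 / 2 : ℝ) • ((L X - b) + (L Y - b)) := by
      rw [map_smul, map_add]
      module
    have h3 : ‖L ((1 / 2 : ℝ) • (X + Y)) - b‖ ≤ (1 / 2) * (‖L X - b‖ + ‖L Y - b‖) := by
      rw [e, norm_smul]
      norm_num
      exact norm_add_le _ _
    have h4 := norm_nonneg (L ((1 / 2 : ℝ) • (X + Y)) - b)
    nlinarith [sq_nonneg (‖L X - b‖ - ‖L Y - b‖), mul_self_le_mul_self h4 h3]
  have h1' := mul_le_mul_of_nonneg_left h1 (by positivity : 0 ≤ μ / 2)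
  have h2' := mul_le_mul_of_nonneg_left h2 (by positivity : 0 ≤ ν / 2)
  linarith

theorem KL_frob_mid {a b : ℕ} (X Y : Matrix (Fin a) (Fin b) ℝ) :
    frobSq ((1 / 2 : ℝ) • (X + Y)) =
      (1 / 2) * frobSq X + (1 / 2) * frobSq Y - (1 / 4) * frobSq (X - Y) := by
  unfold frobSq
  simp only [Finset.mul_sum, ← Finset.sum_add_distrib, ← Finset.sum_sub_distrib]
  refine Finset.sum_congr rfl fun i _ => Finset.sum_congr rfl fun j _ => ?_
  simp only [Matrix.sub_apply, Matrix.smul_apply, Matrix.add_apply, smul_eq_mul]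
  ring

theorem KL_frob_nonneg {a b : ℕ} (X : Matrix (Fin a) (Fin b) ℝ) : 0 ≤ frobSq X :=
  Finset.sum_nonneg fun _ _ => Finset.sum_nonneg fun _ _ => sq_nonneg _

theorem KL_frob_entry {a b : ℕ} (X : Matrix (Fin a) (Fin b) ℝ) (i : Fin a) (j : Fin b) :
    X i j ^ 2 ≤ frobSq X := by
  refine (Finset.single_le_sum (f := fun j => X i j ^ 2) (fun _ _ => sq_nonneg _)
    (Finset.mem_univ j)).trans ?_
  exact Finset.single_le_sum (f := fun i => ∑ j, X i j ^ 2)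
    (fun _ _ => Finset.sum_nonneg fun _ _ => sq_nonneg _) (Finset.mem_univ i)

/-- functions given by polynomials -/
def KL_IsPoly {σ : Type*} (f : (σ → ℝ) → ℝ) : Prop :=
  ∃ P : MvPolynomial σ ℝ, ∀ z, MvPolynomial.eval z P = f z

namespace KL_IsPoly

variable {σ : Type*} {f g : (σ → ℝ) → ℝ}

theorem const (a : ℝ) : KL_IsPoly (fun _ : σ → ℝ => a) := ⟨MvPolynomial.C a, by simp⟩

theorem coord (i : σ) : KL_IsPoly (fun z : σ → ℝ => z i) := ⟨MvPolynomial.X i, by simp⟩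

theorem add (hf : KL_IsPoly f) (hg : KL_IsPoly g) : KL_IsPoly (fun z => f z + g z) := by
  obtain ⟨p, hp⟩ := hf
  obtain ⟨q, hq⟩ := hg
  exact ⟨p + q, by simp [hp, hq]⟩

theorem sub (hf : KL_IsPoly f) (hg : KL_IsPoly g) : KL_IsPoly (fun z => f z - g z) := by
  obtain ⟨p, hp⟩ := hf
  obtain ⟨q, hq⟩ := hg
  exact ⟨p - q, by simp [hp, hq]⟩

theorem mul (hf : KL_IsPoly f) (hg : KL_IsPoly g) : KL_IsPoly (fun z => f z * g z) := by
  obtain ⟨p, hp⟩ := hf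
  obtain ⟨q, hq⟩ := hg
  exact ⟨p * q, by simp [hp, hq]⟩

theorem sq (hf : KL_IsPoly f) : KL_IsPoly (fun z => f z ^ 2) := by
  obtain ⟨p, hp⟩ := hf
  exact ⟨p ^ 2, by simp [hp]⟩

theorem sum {ι : Type*} (s : Finset ι) {f : ι → (σ → ℝ) → ℝ} (hf : ∀ i, KL_IsPoly (f i)) :
    KL_IsPoly (fun z => ∑ i ∈ s, f i z) := by
  choose p hp using hf
  exact ⟨∑ i ∈ s, p i, by simp [hp]⟩

end KL_IsPoly

theorem KL_objF_poly {m n r p : ℕ} (Ω : Finset (Fin m × Fin n)) (M : Matrix (Fin m) (Fin n) ℝ)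
    (L : Matrix (Fin m) (Fin n) ℝ →ₗ[ℝ] EuclideanSpace ℝ (Fin p))
    (b : EuclideanSpace ℝ (Fin p)) (μ ν : ℝ) :
    KL_IsPoly (fun z : (Fin m × Fin r) ⊕ (Fin r × Fin n) → ℝ => objF Ω M L b μ ν
      (Matrix.of fun i j => z (Sum.inl (i, j))) (Matrix.of fun i j => z (Sum.inr (i, j)))) := by
  have hprod : ∀ i j, KL_IsPoly (fun z : (Fin m × Fin r) ⊕ (Fin r × Fin n) → ℝ =>
      ((Matrix.of fun i j => z (Sum.inl (i, j)) : Matrix (Fin m) (Fin r) ℝ) *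
        (Matrix.of fun i j => z (Sum.inr (i, j)) : Matrix (Fin r) (Fin n) ℝ)) i j) := by
    intro i j
    simp only [Matrix.mul_apply, Matrix.of_apply]
    exact .sum _ fun k => (KL_IsPoly.coord _).mul (.coord _)
  have hL : ∀ (X : Matrix (Fin m) (Fin n) ℝ) (l : Fin p),
      (L X) l = ∑ i, ∑ j, X i j * (L (Matrix.single i j 1)) l := by
    intro X l
    conv_lhs => rw [Matrix.matrix_eq_sum_single X]
    simp only [map_sum, WithLp.ofLp_sum, Finset.sum_apply]
    refine Finset.sum_congr rfl fun i _ => Finset.sum_congr rfl fun j _ => ?_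
    have : Matrix.single i j (X i j) = X i j • (Matrix.single i j 1 : Matrix (Fin m) (Fin n) ℝ) := by
      simp
    rw [this, map_smul]
    simp
  obtain ⟨c, hc⟩ : ∃ c : Fin m → Fin n → Fin p → ℝ, ∀ (X : Matrix (Fin m) (Fin n) ℝ) (l : Fin p),
      (L X) l = ∑ i, ∑ j, X i j * c i j l := ⟨_, hL⟩
  unfold objF frobSq
  simp only [EuclideanSpace.norm_sq_eq, Real.norm_eq_abs, sq_abs, WithLp.ofLp_sub, Pi.sub_apply, hc,
    Matrix.sub_apply]
  refine .add (.add (.mul (.const _) (.add ?_ ?_)) (.mul (.const _) ?_)) (.mul (.const _) ?_)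
  · exact .sum _ fun i => .sum _ fun j => .sq (.coord _)
  · exact .sum _ fun i => .sum _ fun j => .sq (.coord _)
  · exact .sum _ fun ij => .sq (.sub (hprod _ _) (.const _))
  · exact .sum _ fun l => .sq (.sub (.sum _ fun i => .sum _ fun j => (hprod i j).mul (.const _)) (.const _))


/-- Convergence of the alternating-minimization iterates. -/
theorem objF_iterates_converge {m n r p : ℕ} (Ω : Finset (Fin m × Fin n)) (M : Matrix (Fin m) (Fin n) ℝ)
    (L : Matrix (Fin m) (Fin n) ℝ →ₗ[ℝ] EuclideanSpace ℝ (Fin p))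
    (b : EuclideanSpace ℝ (Fin p)) (μ ν : ℝ) (hμ : 0 < μ) (hν : 0 < ν)
    (U : ℕ → Matrix (Fin m) (Fin r) ℝ) (V : ℕ → Matrix (Fin r) (Fin n) ℝ)
    (hUstep : ∀ (k : ℕ) (U' : Matrix (Fin m) (Fin r) ℝ),
      objF Ω M L b μ ν (U (k + 1)) (V k) ≤ objF Ω M L b μ ν U' (V k))
    (hVstep : ∀ (k : ℕ) (V' : Matrix (Fin r) (Fin n) ℝ),
      objF Ω M L b μ ν (U (k + 1)) (V (k + 1)) ≤ objF Ω M L b μ ν (U (k + 1)) V') :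
    ∃ (Ustar : Matrix (Fin m) (Fin r) ℝ) (Vstar : Matrix (Fin r) (Fin n) ℝ),
      Filter.Tendsto U Filter.atTop (nhds Ustar) ∧
        Filter.Tendsto V Filter.atTop (nhds Vstar) := by
  classical
  obtain ⟨P, hP⟩ := KL_objF_poly (r := r) Ω M L b μ ν
  let enc : Matrix (Fin m) (Fin r) ℝ → Matrix (Fin r) (Fin n) ℝ →
    ((Fin m × Fin r) ⊕ (Fin r × Fin n)) → ℝ :=
    fun A B => Sum.elim (fun q => A q.1 q.2) (fun q => B q.1 q.2)
  have hPe : ∀ A B, MvPolynomial.eval (enc A B) P = objF Ω M L b μ ν A B := fun A B => hP _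
  -- quadratic growth in each block
  have hUgrow : ∀ k, (1 / 4) * frobSq (U (k + 1) - U k) ≤
      objF Ω M L b μ ν (U k) (V k) - objF Ω M L b μ ν (U (k + 1)) (V k) := by
    intro k
    have h := hUstep k ((1 / 2 : ℝ) • (U (k + 1) + U k))
    have h2 := KL_dat_mid Ω M L b μ ν hμ hν (U (k + 1) * V k) (U k * V k)
    rw [KL_objF_eq, KL_objF_eq, KL_frob_mid, Matrix.smul_mul, Matrix.add_mul] at h
    rw [KL_objF_eq, KL_objF_eq]
    linarith
  have hVgrow : ∀ k, (1 / 4) * frobSq (V (k + 1) - V k) ≤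
      objF Ω M L b μ ν (U (k + 1)) (V k) - objF Ω M L b μ ν (U (k + 1)) (V (k + 1)) := by
    intro k
    have h := hVstep k ((1 / 2 : ℝ) • (V (k + 1) + V k))
    have h2 := KL_dat_mid Ω M L b μ ν hμ hν (U (k + 1) * V (k + 1)) (U (k + 1) * V k)
    rw [KL_objF_eq, KL_objF_eq, KL_frob_mid, Matrix.mul_smul, Matrix.mul_add] at h
    rw [KL_objF_eq, KL_objF_eq]
    linarith
  have hanti : Antitone fun k => objF Ω M L b μ ν (U k) (V k) := antitone_nat_of_succ_le fun k => by
    linarith [hUgrow k, hVgrow k, KL_frob_nonneg (U (k + 1) - U k),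
      KL_frob_nonneg (V (k + 1) - V k)]
  have hlow : ∀ A B, (1 / 2) * (frobSq A + frobSq B) ≤ objF Ω M L b μ ν (r := r) A B := by
    intro A B
    rw [KL_objF_eq]
    linarith [KL_dat_nonneg Ω M L b μ ν hμ hν (A * B)]
  set T := objF Ω M L b μ ν (U 0) (V 0) with hT
  have hT0 : 0 ≤ T := by
    linarith [hlow (U 0) (V 0), KL_frob_nonneg (U 0), KL_frob_nonneg (V 0)]
  have hbd : ∀ k i, |enc (U k) (V k) i| ≤ 2 * T + 1 := by
    intro k i
    have h1 := hlow (U k) (V k)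
    have h2 : objF Ω M L b μ ν (U k) (V k) ≤ T := hanti (Nat.zero_le k)
    have h3 := KL_frob_nonneg (U k)
    have h4 := KL_frob_nonneg (V k)
    have h5 : (enc (U k) (V k) i) ^ 2 ≤ 2 * T := by
      rcases i with ⟨a, c⟩ | ⟨a, c⟩
      · have := KL_frob_entry (U k) a c
        simp only [enc, Sum.elim_inl]
        linarith
      · have := KL_frob_entry (V k) a c
        simp only [enc, Sum.elim_inr]
        linarith
    exact abs_le_of_sq_le_sq (by nlinarith) (by linarith)
  obtain ⟨z, hz⟩ := KL_converge P (fun k => enc (U k) (V k)) (fun k => enc (U (k + 1)) (V k))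
    (2 * T + 1) (1 / 4) 0 (by linarith) (by norm_num) hbd
    (fun k => by
      rw [hPe]
      linarith [hlow (U k) (V k), KL_frob_nonneg (U k), KL_frob_nonneg (V k)])
    (fun k i => by
      rcases i with i | i
      · right; rfl
      · left; rfl)
    (fun k => by
      rw [hPe, hPe, Fintype.sum_sum_type, Fintype.sum_prod_type, Fintype.sum_prod_type]
      have h1 := hUgrow k
      have h2 := hVgrow k
      simp only [frobSq, Matrix.sub_apply] at h1 h2
      simp only [enc, Sum.elim_inl, Sum.elim_inr]
      linarith)
    (fun k i => by
      rcases i with i | i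
      · left
        refine KL_crit P _ _ fun t => ?_
        rw [hPe, hP]
        have e : (Matrix.of fun a c =>
            Function.update (enc (U (k + 1)) (V k)) (Sum.inl i) t (Sum.inr (a, c))) = V k := by
          ext a c
          simp [enc]
        beta_reduce
        rw [e]
        exact hUstep k _
      · right
        refine KL_crit P _ _ fun t => ?_
        rw [hPe, hP]
        have e : (Matrix.of fun a c =>
            Function.update (enc (U (k + 1)) (V (k + 1))) (Sum.inr i) t (Sum.inl (a, c))) =
              U (k + 1) := by
          ext a c
          simp [enc]
        beta_reduce
        rw [e]
        exact hVstep k _)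
  rw [tendsto_pi_nhds] at hz
  refine ⟨Matrix.of fun i j => z (Sum.inl (i, j)), Matrix.of fun i j => z (Sum.inr (i, j)), ?_, ?_⟩
  · refine tendsto_pi_nhds.2 fun i => tendsto_pi_nhds.2 fun j => ?_
    exact hz (Sum.inl (i, j))
  · refine tendsto_pi_nhds.2 fun i => tendsto_pi_nhds.2 fun j => ?_
    exact hz (Sum.inr (i, j))
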